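/- arXiv:1504.01897 — 5 statements merged into one kernel-verified Lean document; each statement's English description precedes it below -/
import Mathlib

section
/- Let m > 0 and ℓ be real constants, let z : ℝ → ℂ be twice differentiable with z(t) ≠ 0 for all t, let r(t) = |z(t)| be twice differentiable, and suppose that for all t, z'(t) = ( r'(t) + i·ℓ/(m·r(t)) ) · z(t)/r(t). Then for all t, z''(t) = ( r''(t) − ℓ²/(m²·r(t)³) ) · z(t)/r(t). -/
/-!
Logarithmic differentiation: if `z' = w z` then `z'' = (w' + w²) z`. With `w = r'/r + c/r²` one
has `w' = r''/r - r'²/r² - 2cr'/r³` and `w² = r'²/r² + 2cr'/r³ + c²/r⁴`, so the radial terms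
`r'²/r²` and the Coriolis terms `2cr'/r³` cancel and `z'' = (r'' + c²/r³) z/r`. The choice
`c = iℓ/m` turns `c²` into the centrifugal `-ℓ²/m²`.
-/

open Filter Topology

section LogarithmicRate

variable {𝕜 𝕜' E : Type*} [NontriviallyNormedField 𝕜]
  [NontriviallyNormedField 𝕜'] [NormedAlgebra 𝕜 𝕜']

/-- The logarithmic velocity `z' / z` of a trajectory `z` with radial coordinate `r`, radial
velocity `r'` and angular constant `c`. Both `r` and `c` take values in `𝕜'`, so that planar motion
of mass `m` and angular momentum `ℓ` is the case `𝕜' = ℂ`, `c = iℓ/m`. -/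
def polarRate (r r' : 𝕜 → 𝕜') (c : 𝕜') (s : 𝕜) : 𝕜' :=
  (r' s + c / r s) / r s

theorem hasDerivAt_polarRate {r r' : 𝕜 → 𝕜'} {r'' : 𝕜'} {t : 𝕜} (c : 𝕜')
    (hr : HasDerivAt r (r' t) t) (hr' : HasDerivAt r' r'' t) (hr₀ : r t ≠ 0) :
    HasDerivAt (polarRate r r' c) ((r'' + c ^ 2 / r t ^ 3) / r t - polarRate r r' c t ^ 2) t := by
  have h_angular : HasDerivAt (fun s ↦ c / r s) (-(c * r' t) / r t ^ 2) t := by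
    simpa using (hasDerivAt_const t c).fun_div hr hr₀
  refine ((hr'.fun_add h_angular).fun_div hr hr₀).congr_deriv ?_
  simp only [polarRate]
  field

variable [NormedAddCommGroup E] [NormedSpace 𝕜 E] [NormedSpace 𝕜' E] [IsScalarTower 𝕜 𝕜' E]

theorem hasDerivAt_deriv_of_eventually_hasDerivAt_smul {z : 𝕜 → E} {w : 𝕜 → 𝕜'} {w' : 𝕜'} {t : 𝕜}
    (hz : ∀ᶠ s in 𝓝 t, HasDerivAt z (w s • z s) s) (hw : HasDerivAt w w' t) :
    HasDerivAt (deriv z) ((w' + w t ^ 2) • z t) t := by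
  have h_deriv : deriv z =ᶠ[𝓝 t] fun s ↦ w s • z s := hz.mono fun _ hs ↦ hs.deriv
  refine ((hw.fun_smul hz.self_of_nhds).congr_of_eventuallyEq h_deriv).congr_deriv ?_
  module

theorem acceleration_decomposition_general {z : 𝕜 → E} {r r' : 𝕜 → 𝕜'} {r'' c : 𝕜'} {t : 𝕜}
    (hr : HasDerivAt r (r' t) t) (hr' : HasDerivAt r' r'' t) (hr₀ : r t ≠ 0)
    (hz : ∀ᶠ s in 𝓝 t, HasDerivAt z (((r' s + c / r s) / r s) • z s) s) :
    HasDerivAt (deriv z) (((r'' + c ^ 2 / r t ^ 3) / r t) • z t) t := by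
  simpa only [sub_add_cancel] using
    hasDerivAt_deriv_of_eventually_hasDerivAt_smul (w := polarRate r r' c) hz
      (hasDerivAt_polarRate c hr hr' hr₀)

end LogarithmicRate

/-- If a planar trajectory `z` with constant angular momentum `ℓ` satisfies
the velocity decomposition `z' = (r' + i·ℓ/(m·r))·z/r` with `r = |z|` twice
differentiable, then `z'' = (r'' − ℓ²/(m²·r³))·z/r`. -/
theorem acceleration_decomposition (m ℓ : ℝ) (hm : 0 < m)
    (z : ℝ → ℂ) (hz : Differentiable ℝ z) (hz' : Differentiable ℝ (deriv z))
    (hne : ∀ t, z t ≠ 0)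
    (r : ℝ → ℝ) (hr : ∀ t, r t = ‖z t‖)
    (hrd : Differentiable ℝ r) (hrd' : Differentiable ℝ (deriv r))
    (hvel : ∀ t, deriv z t =
      (((deriv r t : ℝ) : ℂ) + Complex.I * ((ℓ / (m * r t) : ℝ) : ℂ)) * z t / ((r t : ℝ) : ℂ)) :
    ∀ t, deriv (deriv z) t =
      (((deriv (deriv r) t : ℝ) : ℂ) - ((ℓ ^ 2 / (m ^ 2 * (r t) ^ 3) : ℝ) : ℂ)) * z t /
        ((r t : ℝ) : ℂ) := by
  intro t
  have hr₀ : (r t : ℂ) ≠ 0 := by simpa [hr t] using hne t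
  have h_vel (s : ℝ) :
      HasDerivAt z (((deriv r s + Complex.I * (ℓ / m) / r s) / r s : ℂ) • z s) s := by
    refine (hz s).hasDerivAt.congr_deriv ((hvel s).trans ?_)
    push_cast
    rw [smul_eq_mul]
    ring
  rw [(acceleration_decomposition_general (hrd t).hasDerivAt.ofReal_comp
    (hrd' t).hasDerivAt.ofReal_comp hr₀ (.of_forall h_vel)).deriv, smul_eq_mul, mul_pow,
    Complex.I_sq]
  push_cast
  ring
end

section
/- Let I ⊆ (0,∞) be an open interval, m > 0, ℓ ≠ 0 real constants, ε ∈ {1, −1}, let f : ℝ → ℝ be differentiable with f(r) > 0 on I, and let u : ℝ → ℝ be twice differentiable on I satisfying u''(r) + (1/r + f'(r)/(2f(r)))·u'(r) + u(r)/(r²·f(r)) = 0 on I. Define b(r) = u'(r) and c(r) = u'(r) + u(r)/r. Let z : ℝ → ℂ be differentiable with z(t) ≠ 0, r(t) := |z(t)| ∈ I, and z'(t) = ( ε·√(f(r(t))) + i )·(ℓ/(m·r(t)²))·z(t) for all t. Then the complexified Fradkin–Bacry–Ruegg–Souriau vector 𝒜(t) = ( c(r(t)) − b(r(t)) + ε·i·√(f(r(t)))·b(r(t))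 )·z(t) is constant in t. -/
/-!
In Sturm–Liouville form the Peres equation reads `(r √f u')' = -u / (r √f)`. Hence, along a
trajectory whose angular velocity is `ω`, the pair `(u, v)` with `v = ε r √f u'` is a harmonic
oscillator in the polar angle: `u̇ = ω v` and `v̇ = -ω u`, that is, `(u + i v)˙ = -i ω (u + i v)`.
The unit vector `z / |z|` rotates the opposite way, `(z / |z|)˙ = i ω (z / |z|)`, and the FBRS
vector is exactly the product `(u + i v) (z / |z|)`.
-/

open Complex

section Polar

variable {z : ℝ → ℂ} {a : ℂ} {t : ℝ}

theorem hasDerivAt_norm_of_hasDerivAt_mul_self (hz : HasDerivAt z (a * z t) t) (hne : z t ≠ 0) :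
    HasDerivAt (fun τ => ‖z τ‖) (a.re * ‖z t‖) t := by
  have hsqrt := hz.norm_sq.sqrt (pow_ne_zero 2 (norm_ne_zero_iff.mpr hne))
  simp only [Real.sqrt_sq (norm_nonneg _)] at hsqrt
  have hinner : inner ℝ (z t) (a * z t) = a.re * ‖z t‖ ^ 2 := by
    rw [Complex.inner, ← normSq_eq_norm_sq, mul_assoc, mul_conj, re_mul_ofReal]
  refine hsqrt.congr_deriv ?_
  rw [hinner]
  field

theorem hasDerivAt_div_norm_of_hasDerivAt_mul_self (hz : HasDerivAt z (a * z t) t)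
    (hne : z t ≠ 0) :
    HasDerivAt (fun τ => z τ / ‖z τ‖) (a.im * I * (z t / ‖z t‖)) t := by
  have hr : (‖z t‖ : ℂ) ≠ 0 := ofReal_ne_zero.mpr (norm_ne_zero_iff.mpr hne)
  refine (hz.div (hasDerivAt_norm_of_hasDerivAt_mul_self hz hne).ofReal_comp hr).congr_deriv ?_
  have ha : a = a.re + a.im * I := (re_add_im a).symm
  push_cast
  field_simp
  linear_combination ha

end Polar

/-- The function `u` is twice differentiable at `r` and satisfies there the Peres radial equation
`u'' + (1/r + f'/(2f)) u' + u/(r² f) = 0`. -/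
structure IsPeresSolutionAt (f u : ℝ → ℝ) (r : ℝ) : Prop where
  differentiableAt : DifferentiableAt ℝ u r
  differentiableAt_deriv : DifferentiableAt ℝ (deriv u) r
  ode : deriv (deriv u) r + (1 / r + deriv f r / (2 * f r)) * deriv u r + u r / (r ^ 2 * f r) = 0

/-- The pair formed by `u` and its Sturm–Liouville momentum `ε r √f u'`, encoded as one complex
number so that the Peres equation becomes a rotation. -/
noncomputable def peresState (ε : ℝ) (f u : ℝ → ℝ) (r : ℝ) : ℂ :=
  u r + (ε * (r * √(f r) * deriv u r) : ℝ) * I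

section Peres

variable {f u : ℝ → ℝ} {r ε : ℝ}

theorem IsPeresSolutionAt.hasDerivAt_mul_sqrt_mul_deriv (hu : IsPeresSolutionAt f u r)
    (hf : DifferentiableAt ℝ f r) (hfpos : 0 < f r) (hr : r ≠ 0) :
    HasDerivAt (fun x => x * √(f x) * deriv u x) (-(u r / (r * √(f r)))) r := by
  have hs : √(f r) ≠ 0 := (Real.sqrt_pos.mpr hfpos).ne'
  have hsq : f r = √(f r) ^ 2 := (Real.sq_sqrt hfpos.le).symm
  refine (((hasDerivAt_id r).mul (hf.hasDerivAt.sqrt hfpos.ne')).mul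
    hu.differentiableAt_deriv.hasDerivAt).congr_deriv ?_
  have hode := hu.ode
  rw [hsq] at hode
  simp only [Pi.mul_apply, id]
  field_simp at hode ⊢
  linear_combination hode

theorem IsPeresSolutionAt.hasDerivAt_peresState (hu : IsPeresSolutionAt f u r)
    (hf : DifferentiableAt ℝ f r) (hfpos : 0 < f r) (hr : r ≠ 0) (hε : ε ^ 2 = 1) :
    HasDerivAt (peresState ε f u) (-I * (ε / (r * √(f r)) : ℝ) * peresState ε f u r) r := by
  have hs : (√(f r) : ℂ) ≠ 0 := ofReal_ne_zero.mpr (Real.sqrt_pos.mpr hfpos).ne'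
  have hrC : (r : ℂ) ≠ 0 := ofReal_ne_zero.mpr hr
  have hεC : (ε : ℂ) ^ 2 = 1 := by exact_mod_cast hε
  have hmomentum := (hu.hasDerivAt_mul_sqrt_mul_deriv hf hfpos hr).const_mul ε
  refine (hu.differentiableAt.hasDerivAt.ofReal_comp.add
    (hmomentum.ofReal_comp.mul_const I)).congr_deriv ?_
  simp only [peresState]
  push_cast
  field_simp
  linear_combination (deriv u r * r * √(f r) : ℂ) * (ε ^ 2 * I_sq - hεC)

theorem IsPeresSolutionAt.hasDerivAt_peresState_norm {z : ℝ → ℂ} {ω t : ℝ}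
    (hu : IsPeresSolutionAt f u ‖z t‖) (hf : DifferentiableAt ℝ f ‖z t‖) (hfpos : 0 < f ‖z t‖)
    (hε : ε ^ 2 = 1) (hne : z t ≠ 0)
    (hz : HasDerivAt z (((ε * √(f ‖z t‖) : ℝ) + I) * ω * z t) t) :
    HasDerivAt (fun τ => peresState ε f u ‖z τ‖) (-(ω * I) * peresState ε f u ‖z t‖) t := by
  have hr : ‖z t‖ ≠ 0 := norm_ne_zero_iff.mpr hne
  have hs : √(f ‖z t‖) ≠ 0 := (Real.sqrt_pos.mpr hfpos).ne'
  have hnorm : HasDerivAt (fun τ => ‖z τ‖) (ε * √(f ‖z t‖) * ω * ‖z t‖) t :=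
    (hasDerivAt_norm_of_hasDerivAt_mul_self hz hne).congr_deriv (by simp)
  have hangular : ε * √(f ‖z t‖) * ω * ‖z t‖ * (ε / (‖z t‖ * √(f ‖z t‖))) = ω := by
    field_simp
    linear_combination ω * hε
  refine ((hu.hasDerivAt_peresState hf hfpos hr hε).scomp t hnorm).congr_deriv ?_
  rw [real_smul, ← mul_assoc, mul_left_comm, ← ofReal_mul, hangular]
  ring

end Peres

/-- The complexified Fradkin–Bacry–Ruegg–Souriau vector `𝒜 = (c - b + ε i √f b) z` at the position
`z`, the radial profiles `f`, `b`, `c` being evaluated at `|z|`. -/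
noncomputable def fbrsVector (ε : ℝ) (f b c : ℝ → ℝ) (z : ℂ) : ℂ :=
  (((c ‖z‖ - b ‖z‖ : ℝ) : ℂ) + (ε : ℂ) * I * (√(f ‖z‖) : ℂ) * (b ‖z‖ : ℂ)) * z

theorem fbrsVector_eq_peresState_mul {ε : ℝ} {f u : ℝ → ℝ} {w : ℂ} (hw : w ≠ 0) :
    fbrsVector ε f (deriv u) (fun x => deriv u x + u x / x) w =
      peresState ε f u ‖w‖ * (w / ‖w‖) := by
  have hr : (‖w‖ : ℂ) ≠ 0 := ofReal_ne_zero.mpr (norm_ne_zero_iff.mpr hw)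
  simp only [fbrsVector, peresState]
  push_cast
  field

theorem fbrs_vector_conserved_general {S J : Set ℝ} (hJo : IsOpen J) (hJ : IsPreconnected J)
    {ε : ℝ} (hε : ε ^ 2 = 1) {f u b c ω : ℝ → ℝ} {z : ℝ → ℂ}
    (hf : ∀ r ∈ S, DifferentiableAt ℝ f r) (hfpos : ∀ r ∈ S, 0 < f r)
    (hu : ∀ r ∈ S, IsPeresSolutionAt f u r)
    (hb : ∀ r, b r = deriv u r) (hc : ∀ r, c r = deriv u r + u r / r)
    (hne : ∀ t ∈ J, z t ≠ 0) (hS : ∀ t ∈ J, ‖z t‖ ∈ S)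
    (hz : ∀ t ∈ J, HasDerivAt z (((ε * √(f ‖z t‖) : ℝ) + I) * ω t * z t) t) :
    ∀ s ∈ J, ∀ t ∈ J, fbrsVector ε f b c (z s) = fbrsVector ε f b c (z t) := by
  obtain rfl : b = deriv u := funext hb
  obtain rfl : c = fun r => deriv u r + u r / r := funext hc
  have hderiv : ∀ t ∈ J,
      HasDerivAt (fun τ => peresState ε f u ‖z τ‖ * (z τ / ‖z τ‖)) 0 t := by
    intro t ht
    have hstate := (hu _ (hS t ht)).hasDerivAt_peresState_norm (hf _ (hS t ht))
      (hfpos _ (hS t ht)) hε (hne t ht) (hz t ht)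
    have hdirection := hasDerivAt_div_norm_of_hasDerivAt_mul_self (hz t ht) (hne t ht)
    have hangular : (((ε * √(f ‖z t‖) : ℝ) + I) * ω t).im = ω t := by simp
    rw [hangular] at hdirection
    exact (hstate.mul hdirection).congr_deriv (by ring)
  intro s hs t ht
  rw [fbrsVector_eq_peresState_mul (hne s hs), fbrsVector_eq_peresState_mul (hne t ht)]
  exact hJo.is_const_of_deriv_eq_zero hJ
    (fun τ hτ => (hderiv τ hτ).differentiableAt.differentiableWithinAt)
    (fun τ hτ => (hderiv τ hτ).deriv) hs ht

/-- On a phase of the radial motion (sign `ε = ±1`), with `f > 0`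
differentiable on the open interval `I = (p,q) ⊆ (0,∞)`, `u` a solution of the Peres
radial ODE on `I`, `b = u'`, `c = u' + u/r`, and a trajectory `z` with `r(t) = |z(t)| ∈ I`
satisfying `z' = (ε·√(f(r)) + i)·(ℓ/(m·r²))·z`, the complexified
Fradkin–Bacry–Ruegg–Souriau vector `𝒜 = (c(r) − b(r) + ε·i·√(f(r))·b(r))·z` is
constant in `t`. -/
theorem fbrs_vector_conserved (p q m ℓ : ℝ) (hp : 0 ≤ p) (hm : 0 < m) (hℓ : ℓ ≠ 0)
    (ε : ℝ) (hε : ε = 1 ∨ ε = -1)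
    (f : ℝ → ℝ)
    (hf : ∀ r ∈ Set.Ioo p q, DifferentiableAt ℝ f r)
    (hfpos : ∀ r ∈ Set.Ioo p q, 0 < f r)
    (u : ℝ → ℝ)
    (hu : ∀ r ∈ Set.Ioo p q, DifferentiableAt ℝ u r)
    (hu' : ∀ r ∈ Set.Ioo p q, DifferentiableAt ℝ (deriv u) r)
    (hode : ∀ r ∈ Set.Ioo p q,
      deriv (deriv u) r + (1 / r + deriv f r / (2 * f r)) * deriv u r +
        u r / (r ^ 2 * f r) = 0)
    (b c : ℝ → ℝ)
    (hb : ∀ r, b r = deriv u r)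
    (hc : ∀ r, c r = deriv u r + u r / r)
    (z : ℝ → ℂ) (hz : Differentiable ℝ z) (hzne : ∀ t, z t ≠ 0)
    (hrI : ∀ t, ‖z t‖ ∈ Set.Ioo p q)
    (hvel : ∀ t, deriv z t =
      (((ε * Real.sqrt (f (‖z t‖)) : ℝ) : ℂ) + Complex.I) *
        ((ℓ / (m * (‖z t‖) ^ 2) : ℝ) : ℂ) * z t) :
    ∀ s t,
      (((c (‖z s‖) - b (‖z s‖) : ℝ) : ℂ) +
          ((ε : ℝ) : ℂ) * Complex.I * ((Real.sqrt (f (‖z s‖)) : ℝ) : ℂ) *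
            ((b (‖z s‖) : ℝ) : ℂ)) * z s =
      (((c (‖z t‖) - b (‖z t‖) : ℝ) : ℂ) +
          ((ε : ℝ) : ℂ) * Complex.I * ((Real.sqrt (f (‖z t‖)) : ℝ) : ℂ) *
            ((b (‖z t‖) : ℝ) : ℂ)) * z t :=
  fun s t => fbrs_vector_conserved_general (ω := fun t => ℓ / (m * ‖z t‖ ^ 2)) isOpen_univ
    isPreconnected_univ (sq_eq_one_iff.mpr hε) hf hfpos
    (fun r hr => ⟨hu r hr, hu' r hr, hode r hr⟩) hb hc (fun t _ => hzne t) (fun t _ => hrI t)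
    (fun t _ => hvel t ▸ (hz t).hasDerivAt) s trivial t trivial
end

section
/- Let ν be a natural number with ν ≥ 2, set μ = 2ν − 3, and let c be a real constant. Let w : ℝ → ℂ be twice differentiable with w(s) ≠ 0 for all s, satisfying w''(s) = −c·w(s)·|w(s)|^{μ−1} for all s. Let t : ℝ → ℝ be differentiable with t'(τ) = |w(t(τ))|^{−2(ν−1)} for all τ, and define ζ(τ) = w(t(τ))^ν. Then ζ is twice differentiable and for all τ, ζ''(τ) = −2·ν·(ν−1)·E(t(τ)) · ζ(τ) · |ζ(τ)|^{−(4ν−2)/ν}, where E(s) = (1/2)·|w'(s)|² + (c/(μ+1))·|w(s)|^{μ+1} (which is constant along the motion). -/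
/-!
Write `w = exp u`, so that `ζ = exp (ν u)`. The Sundman factor `‖w‖ ^ (-2(ν - 1))` equals
`exp (-(ν - 1)(u + conj u))`, and its holomorphic half turns the factor `ν w ^ (ν - 1)` of the
chain rule into `ν`: the new velocity is `ζ' = ν ẇ exp (-(ν - 1) conj u)`. Differentiating once
more gives, up to a common factor, `(ν - 1) ‖ẇ‖² / ‖w‖²` from the antiholomorphic factor and
`c ‖w‖ ^ (μ - 1)` from `ẅ`. These are the kinetic and the potential energy divided by `‖w‖²`, with
weights `2(ν - 1)` and `μ + 1`, and the two weights agree. Only a local logarithm `u` of `w` enters,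
so `w ^ ν` may be multivalued.
-/

open Filter
open scoped Topology ComplexConjugate

/-- The energy of a particle of unit mass with position `w` and velocity `v` in the plane, under
the central force `-c w ‖w‖ ^ (μ - 1)`; for `μ = -1` the potential is logarithmic and this
expression is a junk value. -/
noncomputable def powerLawEnergy (c μ : ℝ) (w v : ℂ) : ℝ :=
  (1 / 2) * ‖v‖ ^ 2 + (c / (μ + 1)) * ‖w‖ ^ (μ + 1)

/-- `z` is, near the time `s`, a branch of the multivalued power `w ^ ν` along the curve `w`. The
branch is encoded by a differentiable logarithm `u` of `w`. -/
def IsPowBranchAt (ν : ℝ) (w z : ℝ → ℂ) (s : ℝ) : Prop :=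
  ∃ u : ℝ → ℂ, ∀ᶠ x in 𝓝 s,
    DifferentiableAt ℝ u x ∧ w x = Complex.exp (u x) ∧ z x = Complex.exp (ν * u x)

/-- The velocity, with respect to the Sundman time, of the image of the curve `w = exp u` under
the conformal map `w ↦ w ^ ν`, as a function of the original time. -/
noncomputable def dualVelocity (ν : ℝ) (w u : ℝ → ℂ) (s : ℝ) : ℂ :=
  ν * deriv w s * Complex.exp (-(ν - 1) * conj (u s))

theorem exists_eventually_differentiableAt_log {w : ℝ → ℂ} {s : ℝ}
    (hw : ∀ᶠ x in 𝓝 s, DifferentiableAt ℝ w x) (hne : w s ≠ 0) :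
    ∃ u : ℝ → ℂ, ∀ᶠ x in 𝓝 s, DifferentiableAt ℝ u x ∧ w x = Complex.exp (u x) := by
  -- Dividing by `w s` moves the curve to `1`, away from the branch cut of `Complex.log`.
  refine ⟨fun x => Complex.log (w x / w s) + Complex.log (w s), ?_⟩
  have hslit : ∀ᶠ x in 𝓝 s, w x / w s ∈ Complex.slitPlane :=
    (hw.self_of_nhds.continuousAt.div_const _).eventually_mem <|
      Complex.isOpen_slitPlane.mem_nhds <| by
        simpa only [div_self hne] using Complex.one_mem_slitPlane
  filter_upwards [hw, hslit] with x hwx hx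
  refine ⟨((hwx.hasDerivAt.div_const _).clog_real hx).differentiableAt.add_const _, ?_⟩
  rw [Complex.exp_add, Complex.exp_log (Complex.slitPlane_ne_zero hx), Complex.exp_log hne,
    div_mul_cancel₀ _ hne]

theorem isPowBranchAt_pow (n : ℕ) {w : ℝ → ℂ} {s : ℝ}
    (hw : ∀ᶠ x in 𝓝 s, DifferentiableAt ℝ w x) (hne : w s ≠ 0) :
    IsPowBranchAt n w (fun x => w x ^ n) s := by
  obtain ⟨u, hu⟩ := exists_eventually_differentiableAt_log hw hne
  refine ⟨u, hu.mono fun x ⟨hux, hwx⟩ => ⟨hux, hwx, ?_⟩⟩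
  simp only [hwx, Complex.ofReal_natCast, Complex.exp_nat_mul]

theorem norm_exp_ofReal_mul (ν : ℝ) (u : ℂ) :
    ‖Complex.exp (ν * u)‖ = ‖Complex.exp u‖ ^ ν := by
  rw [Complex.norm_exp, Complex.norm_exp, Complex.re_ofReal_mul, ← Real.exp_mul, mul_comm]

theorem norm_exp_rpow_mul_exp_mul (ν : ℝ) (u : ℂ) :
    ((‖Complex.exp u‖ ^ (-(2 * (ν - 1))) : ℝ) : ℂ) * Complex.exp (ν * u) =
      Complex.exp u * Complex.exp (-(ν - 1) * conj u) := by
  rw [Complex.norm_exp, ← Real.exp_mul, Complex.ofReal_exp, ← Complex.exp_add, ← Complex.exp_add]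
  congr 1
  have hre := Complex.add_conj u
  push_cast at hre ⊢
  linear_combination (ν - 1 : ℂ) * hre

theorem rpow_sundman_mul_self_div_sq {r ν : ℝ} (hr : 0 < r) (hν : ν ≠ 0) :
    r ^ (-(2 * (ν - 1))) * r ^ (-(2 * (ν - 1))) / r ^ 2 = (r ^ ν) ^ (-((4 * ν - 2) / ν)) := by
  rw [← Real.rpow_mul hr.le, ← Real.rpow_add hr, ← Real.rpow_natCast, ← Real.rpow_sub hr]
  congr 1
  field_simp
  push_cast
  ring

theorem powerLawForce_sub_eq_energy_mul {c μ : ℝ} (hμ : μ + 1 ≠ 0) {w : ℂ} (hw : w ≠ 0) (v : ℂ) :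
    -(c : ℂ) * w * ((‖w‖ ^ (μ - 1) : ℝ) : ℂ) - ((μ + 1) / 2) * (v * conj (v / w)) =
      -((μ + 1) * powerLawEnergy c μ w v) * (w / (‖w‖ : ℂ) ^ 2) := by
  have hpow : ‖w‖ ^ (μ + 1) = ‖w‖ ^ (μ - 1) * ‖w‖ ^ 2 := by
    rw [← Real.rpow_natCast, ← Real.rpow_add (norm_pos_iff.2 hw)]
    congr 1
    push_cast
    ring
  have hkinetic : v * conj (v / w) = (‖v‖ : ℂ) ^ 2 * (w / (‖w‖ : ℂ) ^ 2) := by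
    have hconj : conj w ≠ 0 := (map_ne_zero _).2 hw
    rw [map_div₀, ← Complex.mul_conj', ← Complex.mul_conj']
    field_simp
  have hμ' : (μ : ℂ) + 1 ≠ 0 := by exact_mod_cast hμ
  have hnorm : (‖w‖ : ℂ) ≠ 0 := by exact_mod_cast norm_ne_zero_iff.2 hw
  rw [hkinetic, powerLawEnergy, hpow]
  push_cast
  field_simp
  ring

theorem sundman_smul_acceleration_eq_dual_force {ν c μ : ℝ} (hν₀ : ν ≠ 0)
    (hν₁ : ν ≠ 1) (hμ : μ = 2 * ν - 3) {p q v : ℂ} (hp : p = Complex.exp q) :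
    ‖p‖ ^ (-(2 * (ν - 1))) • (ν * Complex.exp (-(ν - 1) * conj q) *
        (-(c : ℂ) * p * ((‖p‖ ^ (μ - 1) : ℝ) : ℂ) - (ν - 1) * (v * conj (v / p)))) =
      -((2 * ν * (ν - 1) * powerLawEnergy c μ p v : ℝ) : ℂ) * Complex.exp (ν * q) *
        ((‖Complex.exp (ν * q)‖ ^ (-((4 * ν - 2) / ν)) : ℝ) : ℂ) := by
  have hp₀ : p ≠ 0 := hp ▸ Complex.exp_ne_zero q
  have hμ₁ : μ + 1 ≠ 0 := by
    rw [hμ]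
    exact fun h => hν₁ (by linarith)
  have hνμ : (ν : ℂ) - 1 = (μ + 1) / 2 := by
    rw [hμ]
    push_cast
    ring
  have hforce := powerLawForce_sub_eq_energy_mul (c := c) hμ₁ hp₀ v
  have hcancel := norm_exp_rpow_mul_exp_mul ν q
  rw [← hνμ] at hforce
  rw [← hp] at hcancel
  rw [hforce, norm_exp_ofReal_mul, ← hp, ← rpow_sundman_mul_self_div_sq (norm_pos_iff.2 hp₀) hν₀,
    Complex.real_smul]
  push_cast
  rw [show (μ : ℂ) + 1 = 2 * (ν - 1) by rw [hνμ]; ring]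
  linear_combination (2 * ν * (ν - 1) * powerLawEnergy c μ p v *
    ((‖p‖ ^ (-(2 * (ν - 1))) : ℝ) : ℂ) / (‖p‖ : ℂ) ^ 2) * hcancel

section

variable {ν : ℝ} {w z u : ℝ → ℂ} {σ : ℝ → ℝ} {s τ : ℝ}

theorem deriv_eq_exp_mul_deriv (hu : DifferentiableAt ℝ u s)
    (hwu : w =ᶠ[𝓝 s] fun x => Complex.exp (u x)) :
    deriv w s = Complex.exp (u s) * deriv u s :=
  hwu.deriv_eq.trans hu.hasDerivAt.cexp.deriv

theorem hasDerivAt_comp_sundman (hu : DifferentiableAt ℝ u (σ τ))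
    (hwu : w =ᶠ[𝓝 (σ τ)] fun x => Complex.exp (u x))
    (hzu : z =ᶠ[𝓝 (σ τ)] fun x => Complex.exp (ν * u x))
    (hσ : HasDerivAt σ (‖w (σ τ)‖ ^ (-(2 * (ν - 1)))) τ) :
    HasDerivAt (z ∘ σ) (dualVelocity ν w u (σ τ)) τ := by
  have hz := (hu.hasDerivAt.const_mul (ν : ℂ)).cexp.congr_of_eventuallyEq hzu
  refine (hz.scomp τ hσ).congr_deriv ?_
  rw [dualVelocity, deriv_eq_exp_mul_deriv hu hwu, Complex.real_smul, hwu.eq_of_nhds]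
  linear_combination ν * deriv u (σ τ) * norm_exp_rpow_mul_exp_mul ν (u (σ τ))

theorem hasDerivAt_dualVelocity {a : ℂ} (hu : DifferentiableAt ℝ u s)
    (hw' : HasDerivAt (deriv w) a s) :
    HasDerivAt (dualVelocity ν w u)
      (ν * Complex.exp (-(ν - 1) * conj (u s)) *
        (a - (ν - 1) * (deriv w s * conj (deriv u s)))) s := by
  have hexp := (hu.hasDerivAt.star.const_mul (-(ν - 1) : ℂ)).cexp
  refine ((hw'.const_mul (ν : ℂ)).mul hexp).congr_deriv ?_
  simp only [starRingEnd_apply]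
  ring

end

theorem bohlin_arnold_vassiliev_duality_general {ν c μ : ℝ} {w z : ℝ → ℂ} {σ : ℝ → ℝ} {τ : ℝ}
    (hν₀ : ν ≠ 0) (hν₁ : ν ≠ 1) (hμ : μ = 2 * ν - 3) (hz : IsPowBranchAt ν w z (σ τ))
    (heom : HasDerivAt (deriv w)
      (-(c : ℂ) * w (σ τ) * ((‖w (σ τ)‖ ^ (μ - 1) : ℝ) : ℂ)) (σ τ))
    (hσ : ∀ᶠ x in 𝓝 τ, HasDerivAt σ (‖w (σ x)‖ ^ (-(2 * (ν - 1)))) x) :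
    (∀ᶠ x in 𝓝 τ, DifferentiableAt ℝ (z ∘ σ) x) ∧
      HasDerivAt (deriv (z ∘ σ))
        (-((2 * ν * (ν - 1) * powerLawEnergy c μ (w (σ τ)) (deriv w (σ τ)) : ℝ) : ℂ) *
          (z ∘ σ) τ * ((‖(z ∘ σ) τ‖ ^ (-((4 * ν - 2) / ν)) : ℝ) : ℂ)) τ := by
  obtain ⟨u, hu⟩ := hz
  have hvelocity : ∀ᶠ x in 𝓝 τ, HasDerivAt (z ∘ σ) (dualVelocity ν w u (σ x)) x := by
    have hσu := hσ.self_of_nhds.continuousAt.eventually hu.eventually_nhds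
    filter_upwards [hσ, hσu] with x hσx hux
    exact hasDerivAt_comp_sundman hux.self_of_nhds.1 (hux.mono fun _ h => h.2.1)
      (hux.mono fun _ h => h.2.2) hσx
  refine ⟨hvelocity.mono fun _ h => h.differentiableAt, ?_⟩
  obtain ⟨hus, hws, hzs⟩ := hu.self_of_nhds
  have hlog : deriv u (σ τ) = deriv w (σ τ) / w (σ τ) := by
    rw [deriv_eq_exp_mul_deriv hus (hu.mono fun _ h => h.2.1), hws,
      mul_div_cancel_left₀ _ (Complex.exp_ne_zero _)]
  refine (((hasDerivAt_dualVelocity hus heom).scomp τ hσ.self_of_nhds).congr_of_eventuallyEq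
    (hvelocity.mono fun _ h => h.deriv)).congr_deriv ?_
  rw [Function.comp_apply, hzs, hlog]
  exact sundman_smul_acceleration_eq_dual_force hν₀ hν₁ hμ hws

/-- Bohlin–Arnold–Vassiliev duality, integer conformal power `ν ≥ 2`,
`μ = 2ν − 3`: if `w'' = −c·w·|w|^{μ−1}` and `σ` is the inverse Euler–Sundman
reparametrization, `σ'(τ) = |w(σ(τ))|^{−2(ν−1)}`, then `ζ = (w ∘ σ)^ν` is twice
differentiable and satisfies `ζ'' = −2ν(ν−1)·E(σ(τ))·ζ·|ζ|^{−(4ν−2)/ν}`, where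
`E = (1/2)|w'|² + (c/(μ+1))|w|^{μ+1}` is the conserved energy of the original motion. -/
theorem bohlin_arnold_vassiliev_duality (ν : ℕ) (hν : 2 ≤ ν) (c μ : ℝ)
    (hμ : μ = 2 * (ν : ℝ) - 3)
    (w : ℝ → ℂ) (hw : Differentiable ℝ w) (hw' : Differentiable ℝ (deriv w))
    (hne : ∀ s, w s ≠ 0)
    (heom : ∀ s, deriv (deriv w) s =
      -(c : ℂ) * w s * (((‖w s‖) ^ (μ - 1) : ℝ) : ℂ))
    (σ : ℝ → ℝ) (hσ : Differentiable ℝ σ)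
    (hσ' : ∀ τ, deriv σ τ = (‖w (σ τ)‖) ^ (-(2 * ((ν : ℝ) - 1))))
    (ζ : ℝ → ℂ) (hζ : ∀ τ, ζ τ = (w (σ τ)) ^ ν)
    (E : ℝ → ℝ)
    (hE : ∀ s, E s = (1 / 2) * (‖deriv w s‖) ^ 2 +
      (c / (μ + 1)) * (‖w s‖) ^ (μ + 1)) :
    Differentiable ℝ ζ ∧ Differentiable ℝ (deriv ζ) ∧
      ∀ τ, deriv (deriv ζ) τ =
        -((2 * (ν : ℝ) * ((ν : ℝ) - 1) * E (σ τ) : ℝ) : ℂ) * ζ τ *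
          (((‖ζ τ‖) ^ (-((4 * (ν : ℝ) - 2) / (ν : ℝ))) : ℝ) : ℂ) := by
  obtain rfl : E = fun s => powerLawEnergy c μ (w s) (deriv w s) := funext hE
  obtain rfl : ζ = (fun s => w s ^ ν) ∘ σ := funext hζ
  have hdual τ := bohlin_arnold_vassiliev_duality_general (ν := ν) (c := c) (τ := τ)
    (by positivity) (by exact_mod_cast (by lia : ν ≠ 1)) hμ
    (isPowBranchAt_pow ν (.of_forall hw) (hne (σ τ)))
    (heom (σ τ) ▸ (hw' (σ τ)).hasDerivAt) (.of_forall fun x => hσ' x ▸ (hσ x).hasDerivAt)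
  exact ⟨fun τ => (hdual τ).1.self_of_nhds, fun τ => (hdual τ).2.differentiableAt,
    fun τ => (hdual τ).2.deriv⟩
end

section
/- Let ν be a natural number with ν ≥ 1, let w : ℝ → ℂ be differentiable with w(s) ≠ 0 for all s, let t : ℝ → ℝ be differentiable with t'(τ) = |w(t(τ))|^{−2(ν−1)} for all τ, and define ζ(τ) = w(t(τ))^ν. Then ζ is differentiable and for all τ, ζ'(τ) = ν · w'(t(τ)) / ( conj(w(t(τ))) )^{ν−1}. -/
/-!
The chain rule gives `(w ∘ σ) ^ n` the derivative `n * w ^ (n - 1) * w' * σ'`. Since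
`‖w‖ ^ 2 = w * conj w`, the Sundman factor `σ'` is the inverse of
`w ^ (n - 1) * conj w ^ (n - 1)`: its first factor cancels the power of `w`, and only the power of
the conjugate survives.
-/

open scoped ComplexConjugate

lemma ofReal_norm_zpow_neg_two_mul_mul_zpow {𝕜 : Type*} [RCLike 𝕜] {z : 𝕜} (hz : z ≠ 0) (m : ℤ) :
    ((‖z‖ ^ (-(2 * m)) : ℝ) : 𝕜) * z ^ m = (conj z ^ m)⁻¹ := by
  have hnorm : ((‖z‖ ^ (-(2 * m)) : ℝ) : 𝕜) = (z ^ m)⁻¹ * (conj z ^ m)⁻¹ := by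
    rw [← mul_inv, ← mul_zpow, RCLike.mul_conj, zpow_neg, zpow_mul]
    norm_cast
  rw [hnorm, mul_right_comm, inv_mul_cancel₀ (zpow_ne_zero m hz), one_mul]

theorem sundman_first_derivative_general {𝕜 : Type*} [RCLike 𝕜] (n : ℤ)
    {w : ℝ → 𝕜} {w' : 𝕜} {σ : ℝ → ℝ} {τ : ℝ}
    (hw : HasDerivAt w w' (σ τ)) (hne : w (σ τ) ≠ 0)
    (hσ : HasDerivAt σ (‖w (σ τ)‖ ^ (-(2 * (n - 1)))) τ) :
    HasDerivAt (fun τ ↦ w (σ τ) ^ n) (n * w' / conj (w (σ τ)) ^ (n - 1)) τ := by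
  have hcomp : HasDerivAt (w ∘ σ) (‖w (σ τ)‖ ^ (-(2 * (n - 1))) • w') τ := hw.scomp τ hσ
  have hpow : HasDerivAt (fun z : 𝕜 ↦ z ^ n) (n * w (σ τ) ^ (n - 1)) (w (σ τ)) :=
    hasDerivAt_zpow n _ (Or.inl hne)
  refine (hpow.comp τ hcomp).congr_deriv ?_
  calc n * w (σ τ) ^ (n - 1) * (‖w (σ τ)‖ ^ (-(2 * (n - 1))) • w')
      = n * w' * (((‖w (σ τ)‖ ^ (-(2 * (n - 1))) : ℝ) : 𝕜) * w (σ τ) ^ (n - 1)) := by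
        rw [RCLike.real_smul_eq_coe_mul]
        ring
    _ = n * w' / conj (w (σ τ)) ^ (n - 1) := by
        rw [ofReal_norm_zpow_neg_two_mul_mul_zpow hne, div_eq_mul_inv]

/-- Under the Euler–Sundman reparametrization `σ'(τ) = |w(σ(τ))|^{−2(ν−1)}`
(`ν ≥ 1`), the image trajectory `ζ = (w ∘ σ)^ν` is differentiable with
`ζ'(τ) = ν·w'(σ(τ)) / conj(w(σ(τ)))^{ν−1}`. -/
theorem sundman_first_derivative (ν : ℕ) (hν : 1 ≤ ν)
    (w : ℝ → ℂ) (hw : Differentiable ℝ w) (hne : ∀ s, w s ≠ 0)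
    (σ : ℝ → ℝ) (hσ : Differentiable ℝ σ)
    (hσ' : ∀ τ, deriv σ τ = ‖w (σ τ)‖ ^ (-(2 * ((ν : ℝ) - 1))))
    (ζ : ℝ → ℂ) (hζ : ∀ τ, ζ τ = (w (σ τ)) ^ ν) :
    Differentiable ℝ ζ ∧
      ∀ τ, deriv ζ τ = (ν : ℂ) * deriv w (σ τ) / ((starRingEnd ℂ) (w (σ τ))) ^ (ν - 1) := by
  obtain rfl : ζ = fun τ ↦ w (σ τ) ^ ν := funext hζ
  have hσ_zpow (τ : ℝ) : HasDerivAt σ (‖w (σ τ)‖ ^ (-(2 * ((ν : ℤ) - 1)))) τ := by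
    rw [← Real.rpow_intCast]
    push_cast
    exact hσ' τ ▸ (hσ τ).hasDerivAt
  have hζ_deriv (τ : ℝ) : HasDerivAt (fun τ ↦ w (σ τ) ^ ν)
      (ν * deriv w (σ τ) / conj (w (σ τ)) ^ (ν - 1)) τ := by
    simpa [← Nat.cast_pred hν, zpow_natCast] using
      sundman_first_derivative_general ν (hw (σ τ)).hasDerivAt (hne _) (hσ_zpow τ)
  exact ⟨fun τ ↦ (hζ_deriv τ).differentiableAt, fun τ ↦ (hζ_deriv τ).deriv⟩
end

section
/- Let c be a real constant and let w : ℝ → ℂ be twice differentiable with w(s) ≠ 0 for all s, satisfying the harmonic-oscillator equation w''(s) = −c·w(s) for all s. Let t : ℝ → ℝ be differentiable with t'(τ) = |w(t(τ))|^{−2} for all τ, and define ζ(τ) = w(t(τ))². Then ζ is twice differentiable and for all τ, ζ''(τ) = −2·( |w'(t(τ))|² + c·|w(t(τ))|² ) · ζ(τ) / |ζ(τ)|³. -/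
/-!
Since `dτ = |w|² dt`, the velocity of `ζ = w²` in the new time is `2 w w' / |w|² = 2 w' / conj w`.
In the quotient rule for `w' / conj w` the acceleration contributes `w'' conj w`, and the conjugate
in the denominator turns the other term into `w' conj w' = |w'|²`; if `w'' = -k w`, the difference
of the two is `-(|w'|² + k |w|²)`.
-/

open Filter Topology
open scoped ComplexConjugate

section Sundman

variable {w v : ℝ → ℂ} {σ : ℝ → ℝ} {τ : ℝ}

lemma hasDerivAt_comp_of_sundman {f : ℝ → ℂ} {f' z : ℂ} (hf : HasDerivAt f f' (σ τ))
    (hσ : HasDerivAt σ (‖z‖ ^ 2)⁻¹ τ) :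
    HasDerivAt (fun x => f (σ x)) (f' / (z * conj z)) τ := by
  refine (hf.scomp τ hσ).congr_deriv ?_
  rw [Complex.real_smul, Complex.ofReal_inv, Complex.ofReal_pow, ← Complex.mul_conj',
    inv_mul_eq_div]

lemma hasDerivAt_sq_comp_of_sundman {w' : ℂ} (hne : w (σ τ) ≠ 0) (hw : HasDerivAt w w' (σ τ))
    (hσ : HasDerivAt σ (‖w (σ τ)‖ ^ 2)⁻¹ τ) :
    HasDerivAt (fun x => w (σ x) ^ 2) (2 * w' / conj (w (σ τ))) τ := by
  have hconj : conj (w (σ τ)) ≠ 0 := (map_ne_zero _).2 hne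
  refine ((hasDerivAt_comp_of_sundman hw hσ).pow 2).congr_deriv ?_
  simp only [Nat.cast_ofNat, Nat.add_one_sub_one, pow_one]
  field_simp

lemma hasDerivAt_two_mul_div_conj_comp_of_sundman {a : ℂ} (hne : w (σ τ) ≠ 0)
    (hw : HasDerivAt w (v (σ τ)) (σ τ)) (hv : HasDerivAt v a (σ τ))
    (hσ : HasDerivAt σ (‖w (σ τ)‖ ^ 2)⁻¹ τ) :
    HasDerivAt (fun x => 2 * v (σ x) / conj (w (σ x)))
      (2 * (a * conj (w (σ τ)) - ‖v (σ τ)‖ ^ 2) * w (σ τ) ^ 2 / ‖w (σ τ) ^ 2‖ ^ 3) τ := by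
  have hconj : conj (w (σ τ)) ≠ 0 := (map_ne_zero _).2 hne
  have hquot : HasDerivAt (fun x => 2 * v (σ x) / conj (w (σ x)))
      (2 * (a * conj (w (σ τ)) - v (σ τ) * conj (v (σ τ))) /
        (w (σ τ) * conj (w (σ τ)) * conj (w (σ τ)) ^ 2)) τ := by
    refine (((hasDerivAt_comp_of_sundman hv hσ).const_mul 2).div
      (hasDerivAt_comp_of_sundman hw hσ).star hconj).congr_deriv ?_
    simp only [← starRingEnd_apply, map_div₀, map_mul, Complex.conj_conj]
    field_simp
  have hnorm : (‖w (σ τ) ^ 2‖ : ℂ) = w (σ τ) * conj (w (σ τ)) := by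
    rw [norm_pow, Complex.ofReal_pow, Complex.mul_conj']
  refine hquot.congr_deriv ?_
  rw [hnorm, Complex.mul_conj' (v (σ τ))]
  field_simp

/-- `k` is the coupling at the single instant `τ`, so a time-dependent one is covered too. -/
theorem bohlin_duality_general {k : ℂ} (hne : w (σ τ) ≠ 0)
    (hw : ∀ᶠ s in 𝓝 (σ τ), HasDerivAt w (v s) s) (heom : HasDerivAt v (-k * w (σ τ)) (σ τ))
    (hσ : ∀ᶠ x in 𝓝 τ, HasDerivAt σ (‖w (σ x)‖ ^ 2)⁻¹ x) :
    DifferentiableAt ℝ (fun x => w (σ x) ^ 2) τ ∧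
      HasDerivAt (deriv fun x => w (σ x) ^ 2)
        (-(2 * (‖v (σ τ)‖ ^ 2 + k * ‖w (σ τ)‖ ^ 2)) * w (σ τ) ^ 2 / ‖w (σ τ) ^ 2‖ ^ 3) τ := by
  have hσcont : ContinuousAt σ τ := hσ.self_of_nhds.continuousAt
  have hwcont : ContinuousAt w (σ τ) := hw.self_of_nhds.continuousAt
  have hvel : ∀ᶠ x in 𝓝 τ,
      HasDerivAt (fun y => w (σ y) ^ 2) (2 * v (σ x) / conj (w (σ x))) x := by
    filter_upwards [hσcont.eventually hw, hσcont.eventually (hwcont.eventually_ne hne), hσ]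
      with x hwx hnex hσx using hasDerivAt_sq_comp_of_sundman hnex hwx hσx
  have hacc := hasDerivAt_two_mul_div_conj_comp_of_sundman hne hw.self_of_nhds heom
    hσ.self_of_nhds
  refine ⟨hvel.self_of_nhds.differentiableAt,
    (hacc.congr_of_eventuallyEq (hvel.mono fun _ hx => hx.deriv)).congr_deriv ?_⟩
  rw [mul_assoc (-k), Complex.mul_conj']
  ring

end Sundman

/-- classical Bohlin duality, `ν = 2`: if `w'' = −c·w` (planar isotropic
harmonic oscillator) and `σ'(τ) = |w(σ(τ))|^{−2}`, then `ζ = (w ∘ σ)²` is twice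
differentiable and satisfies the Kepler-type equation
`ζ'' = −2(|w'(σ)|² + c·|w(σ)|²)·ζ/|ζ|³`. -/
theorem bohlin_duality (c : ℝ)
    (w : ℝ → ℂ) (hw : Differentiable ℝ w) (hw' : Differentiable ℝ (deriv w))
    (hne : ∀ s, w s ≠ 0)
    (heom : ∀ s, deriv (deriv w) s = -(c : ℂ) * w s)
    (σ : ℝ → ℝ) (hσ : Differentiable ℝ σ)
    (hσ' : ∀ τ, deriv σ τ = ‖w (σ τ)‖ ^ (-2 : ℝ))
    (ζ : ℝ → ℂ) (hζ : ∀ τ, ζ τ = (w (σ τ)) ^ 2) :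
    Differentiable ℝ ζ ∧ Differentiable ℝ (deriv ζ) ∧
      ∀ τ, deriv (deriv ζ) τ =
        -((2 * (‖deriv w (σ τ)‖ ^ 2 + c * ‖w (σ τ)‖ ^ 2) : ℝ) : ℂ) *
          ζ τ / ((‖ζ τ‖ ^ 3 : ℝ) : ℂ) := by
  obtain rfl : ζ = fun τ => w (σ τ) ^ 2 := funext hζ
  have hsundman : ∀ τ, HasDerivAt σ (‖w (σ τ)‖ ^ 2)⁻¹ τ := fun τ => by
    simpa [hσ', Real.rpow_neg] using (hσ τ).hasDerivAt
  have hkepler := fun τ => bohlin_duality_general (hne (σ τ))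
    (.of_forall fun s => (hw s).hasDerivAt) (heom (σ τ) ▸ (hw' (σ τ)).hasDerivAt)
    (.of_forall hsundman)
  exact ⟨fun τ => (hkepler τ).1, fun τ => (hkepler τ).2.differentiableAt,
    fun τ => mod_cast (hkepler τ).2.deriv⟩
end
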